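/- arXiv:2202.08178 — 4 statements merged into one kernel-verified Lean document; each statement's English description precedes it below -/
import Mathlib

section
/- Characterization of strict pre-dissipativity with scaled quadratic storage (Theorem 4.5): Assume there exists c_K > 0 such that ‖Ku‖ ≥ c_K‖Bu‖ for all u ∈ U. Let P be a bounded self-adjoint operator on H and let (x_e,u_e) be a controlled equilibrium. Then the following are equivalent: (i) there exist γ > 0, w ∈ H and α of class 𝒦 such that 2Re⟨Ax + Bu, γPx + w⟩ ≤ ℓ(x,u) − ℓ(x_e,u_e) − α(‖x − x_e‖) for all x ∈ dom A and u ∈ U; (ii) there exists w̃ ∈ dom A* with A*w̃ = z + C*C x_e and B*w̃ = v + K*K u_e, and there exist η > 0 and m > 0 such that ‖Cx‖² − 2η Re⟨Ax, Px⟩ ≥ m‖x‖² for all x ∈ dom A. -/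
open scoped InnerProductSpace
open RCLike ContinuousLinearMap

/-- A function of class `𝒦`: continuous, strictly increasing on `[0,∞)` with `α 0 = 0`. -/
def IsClassK (α : ℝ → ℝ) : Prop :=
  ContinuousOn α (Set.Ici 0) ∧ StrictMonoOn α (Set.Ici 0) ∧ α 0 = 0

/-- The generalized linear-quadratic stage cost
`ℓ(x,u) = ‖Cx‖² + ‖Ku‖² + 2Re⟨z,x⟩ + 2Re⟨v,u⟩`. -/
noncomputable def ell {𝕜 H U Y Z : Type*} [RCLike 𝕜]
    [NormedAddCommGroup H] [InnerProductSpace 𝕜 H]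
    [NormedAddCommGroup U] [InnerProductSpace 𝕜 U]
    [NormedAddCommGroup Y] [InnerProductSpace 𝕜 Y]
    [NormedAddCommGroup Z] [InnerProductSpace 𝕜 Z]
    (C : H →L[𝕜] Y) (K : U →L[𝕜] Z) (z : H) (v : U) (x : H) (u : U) : ℝ :=
  ‖C x‖ ^ 2 + ‖K u‖ ^ 2 + 2 * re ⟪z, x⟫_𝕜 + 2 * re ⟪v, u⟫_𝕜

/-!
Expand the dissipation inequality at `(xₑ + h, uₑ + k)`. The constant terms cancel because
`(xₑ, uₑ)` is an equilibrium, and what remains is `α ‖h‖ ≤ Q(h, k) + 2 L(h, k)` with `Q` quadratic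
and `L` real-linear. Replacing `(h, k)` by `(t h, t k)` with `t → 0` forces `L = 0`, which says that
`w̃ = P xₑ + w` solves the adjoint system; normalizing `‖h‖ = 1` then turns the class-`𝒦` bound into
`α 1 * ‖h‖² ≤ Q(h, k)`. Putting `k = 0` gives the inequality for `C`, `A` and `P`.
Conversely, that inequality controls `Q` after `P` is scaled down by `s ≤ 1`: the cross term
`2 s Re⟨B k, P h⟩` is absorbed by `‖K k‖²` up to an error of order `s² ‖h‖²`, whereas the available
coercivity is of order `s ‖h‖²`.
-/

theorem IsClassK.nonneg {α : ℝ → ℝ} (hα : IsClassK α) {r : ℝ} (hr : 0 ≤ r) : 0 ≤ α r :=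
  hα.2.2 ▸ hα.2.1.monotoneOn Set.self_mem_Ici hr hr

theorem IsClassK.pos {α : ℝ → ℝ} (hα : IsClassK α) {r : ℝ} (hr : 0 < r) : 0 < α r :=
  hα.2.2 ▸ hα.2.1 Set.self_mem_Ici hr.le hr

theorem isClassK_const_mul_sq {c : ℝ} (hc : 0 < c) : IsClassK fun r ↦ c * r ^ 2 := by
  refine ⟨by fun_prop, fun a (ha : 0 ≤ a) b _ hab ↦ ?_, by simp⟩
  dsimp only
  gcongr

theorem eq_zero_of_forall_nonneg_sq_mul_add_mul {R : Type*} [Field R] [LinearOrder R]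
    [IsStrictOrderedRing R] {a b : R} (h : ∀ t : R, 0 ≤ t ^ 2 * a + t * b) : b = 0 := by
  have hdiscrim : discrim a b 0 ≤ 0 := discrim_le_zero fun t ↦ by linarith [h t]
  exact sq_nonpos_iff b |>.1 (by simpa [discrim] using hdiscrim)

theorem exists_pos_le_one_mul_lt {R : Type*} [Field R] [LinearOrder R] [IsStrictOrderedRing R]
    {ε : R} (hε : 0 < ε) {b : R} (hb : 0 ≤ b) : ∃ s : R, 0 < s ∧ s ≤ 1 ∧ s * b < ε := by
  obtain ⟨c, hc, hbc⟩ := exists_pos_mul_lt hε b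
  refine ⟨min 1 c, lt_min one_pos hc, min_le_left _ _, ?_⟩
  calc min 1 c * b ≤ c * b := by gcongr; exact min_le_right _ _
    _ < ε := by rwa [mul_comm]

theorem linearMap_ext_re {𝕜 M : Type*} [RCLike 𝕜] [AddCommGroup M] [Module 𝕜 M]
    {f g : M →ₗ[𝕜] 𝕜} (h : ∀ x, re (f x) = re (g x)) : f = g := by
  ext x
  have him : im (f x) = im (g x) := by simpa using h ((I : 𝕜) • x)
  exact RCLike.ext (h x) him

section Multiplier

variable {𝕜 H G U : Type*} [RCLike 𝕜]
  [NormedAddCommGroup H] [InnerProductSpace 𝕜 H] [CompleteSpace H]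
  [NormedAddCommGroup G] [InnerProductSpace 𝕜 G]
  [NormedAddCommGroup U] [InnerProductSpace 𝕜 U] [CompleteSpace U]

theorem exists_linearPMap_adjoint_apply_eq_iff {A : H →ₗ.[𝕜] G} (hA : Dense (A.domain : Set H))
    {w : G} {q : H} :
    (∃ hw : w ∈ A.adjoint.domain, A.adjoint ⟨w, hw⟩ = q) ↔
      ∀ x : A.domain, re ⟪A x, w⟫_𝕜 = re ⟪q, (x : H)⟫_𝕜 := by
  constructor
  · rintro ⟨hw, rfl⟩ x
    rw [LinearPMap.adjoint_isFormalAdjoint hA ⟨w, hw⟩ x, inner_re_symm]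
  · intro h
    have hfunctional :
        innerₛₗ 𝕜 q ∘ₗ A.domain.subtype = innerₛₗ 𝕜 w ∘ₗ A.toFun :=
      linearMap_ext_re fun x ↦ (h x).symm.trans (inner_re_symm _ _)
    have hinner : ∀ x : A.domain, ⟪q, (x : H)⟫_𝕜 = ⟪w, A x⟫_𝕜 := DFunLike.congr_fun hfunctional
    exact ⟨LinearPMap.mem_adjoint_domain_of_exists w ⟨q, hinner⟩,
      LinearPMap.adjoint_apply_eq hA _ hinner⟩

variable [CompleteSpace G]

theorem adjoint_apply_eq_iff_re_inner {B : U →L[𝕜] G} {w : G} {r : U} :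
    adjoint B w = r ↔ ∀ u, re ⟪B u, w⟫_𝕜 = re ⟪r, u⟫_𝕜 := by
  constructor
  · rintro rfl u
    rw [adjoint_inner_left, inner_re_symm]
  · intro h
    have hfunctional : innerₛₗ 𝕜 (adjoint B w) = innerₛₗ 𝕜 r :=
      linearMap_ext_re fun u ↦ by
        simp only [innerₛₗ_apply_apply, adjoint_inner_left]
        rw [inner_re_symm, h]
    exact ext_inner_right 𝕜 (DFunLike.congr_fun hfunctional)

/-- `w` solves the adjoint system `A* w = q`, `B* w = r`, i.e. it is a Lagrange multiplier for the
equilibrium constraint `A x + B u = 0`; membership of `w` in the domain of `A*` is included. -/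
def IsMultiplier (A : H →ₗ.[𝕜] G) (B : U →L[𝕜] G) (q : H) (r : U) (w : G) : Prop :=
  ∃ hw : w ∈ A.adjoint.domain, A.adjoint ⟨w, hw⟩ = q ∧ adjoint B w = r

theorem isMultiplier_iff_forall_re_inner {A : H →ₗ.[𝕜] G} (hA : Dense (A.domain : Set H))
    {B : U →L[𝕜] G} {q : H} {r : U} {w : G} :
    IsMultiplier A B q r w ↔
      ∀ (h : A.domain) (k : U),
        re ⟪A h + B k, w⟫_𝕜 = re ⟪q, (h : H)⟫_𝕜 + re ⟪r, k⟫_𝕜 := by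
  rw [IsMultiplier, exists_and_right, exists_linearPMap_adjoint_apply_eq_iff hA,
    adjoint_apply_eq_iff_re_inner]
  constructor
  · rintro ⟨hwA, hwB⟩ h k
    rw [inner_add_left, map_add, hwA, hwB]
  · intro hw
    exact ⟨fun h ↦ by simpa using hw h 0, fun k ↦ by simpa using hw 0 k⟩

end Multiplier

section DissipationForm

variable {𝕜 H G U Y Z : Type*} [RCLike 𝕜]
  [NormedAddCommGroup H] [InnerProductSpace 𝕜 H]
  [NormedAddCommGroup G] [InnerProductSpace 𝕜 G]
  [NormedAddCommGroup U] [InnerProductSpace 𝕜 U]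
  [NormedAddCommGroup Y] [InnerProductSpace 𝕜 Y]
  [NormedAddCommGroup Z] [InnerProductSpace 𝕜 Z]

/-- The quadratic form `‖C h‖² + ‖K k‖² - 2 Re⟨A h + B k, P h⟩`, which is the second-order part of
the stage cost minus the derivative of the storage function along the dynamics. -/
noncomputable def dissipationForm (A : H →ₗ.[𝕜] G) (B : U →L[𝕜] G) (C : H →L[𝕜] Y)
    (K : U →L[𝕜] Z) (P : H →L[𝕜] G) (h : A.domain) (k : U) : ℝ :=
  ‖C (h : H)‖ ^ 2 + ‖K k‖ ^ 2 - 2 * re ⟪A h + B k, P (h : H)⟫_𝕜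

variable {A : H →ₗ.[𝕜] G} {B : U →L[𝕜] G} {C : H →L[𝕜] Y} {K : U →L[𝕜] Z} {P : H →L[𝕜] G}

theorem dissipationForm_ofReal_smul (t : ℝ) (h : A.domain) (k : U) :
    dissipationForm A B C K P ((t : 𝕜) • h) ((t : 𝕜) • k) =
      t ^ 2 * dissipationForm A B C K P h k := by
  simp only [dissipationForm, LinearPMap.map_smul, Submodule.coe_smul, map_smul, ← smul_add,
    inner_smul_left, inner_smul_right, conj_ofReal, re_ofReal_mul, norm_smul, norm_ofReal, mul_pow,
    sq_abs]
  ring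

theorem mul_sq_norm_le_dissipationForm {α : ℝ → ℝ} (hα : 0 ≤ α 0)
    (hform : ∀ (h : A.domain) (k : U), α ‖(h : H)‖ ≤ dissipationForm A B C K P h k)
    (h : A.domain) (k : U) : α 1 * ‖(h : H)‖ ^ 2 ≤ dissipationForm A B C K P h k := by
  rcases (norm_nonneg (h : H)).eq_or_lt' with hzero | hpos
  · simpa [hzero] using hα.trans (hzero ▸ hform h k)
  · set t : ℝ := ‖(h : H)‖⁻¹ with ht
    have hunit : ‖((t : 𝕜) • h : A.domain).1‖ = 1 := by
      rw [Submodule.coe_smul, norm_smul, norm_ofReal, abs_of_pos (inv_pos.2 hpos),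
        inv_mul_cancel₀ hpos.ne']
    have hscaled : α 1 ≤ dissipationForm A B C K P h k / ‖(h : H)‖ ^ 2 := by
      have hbound := hform ((t : 𝕜) • h) ((t : 𝕜) • k)
      rwa [hunit, dissipationForm_ofReal_smul, ht, inv_pow, inv_mul_eq_div] at hbound
    exact (le_div_iff₀ (by positivity)).1 hscaled

theorem two_mul_re_inner_le_sq_norm_add {c : ℝ} (hc : 0 < c) (hKB : ∀ u, c * ‖B u‖ ≤ ‖K u‖)
    (h : H) (k : U) :
    2 * re ⟪B k, P h⟫_𝕜 ≤ ‖K k‖ ^ 2 + (‖P‖ / c) ^ 2 * ‖h‖ ^ 2 := by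
  have hBk : ‖B k‖ ≤ ‖K k‖ / c := by
    rw [le_div_iff₀' hc]
    exact hKB k
  calc 2 * re ⟪B k, P h⟫_𝕜
      ≤ 2 * (‖B k‖ * ‖P h‖) := by gcongr; exact re_inner_le_norm _ _
    _ ≤ 2 * (‖K k‖ / c * (‖P‖ * ‖h‖)) := by gcongr; exact P.le_opNorm h
    _ = 2 * ‖K k‖ * (‖P‖ / c * ‖h‖) := by ring
    _ ≤ ‖K k‖ ^ 2 + (‖P‖ / c * ‖h‖) ^ 2 := two_mul_le_add_sq _ _
    _ = ‖K k‖ ^ 2 + (‖P‖ / c) ^ 2 * ‖h‖ ^ 2 := by rw [mul_pow]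

theorem le_dissipationForm_smul {c : ℝ} (hc : 0 < c) (hKB : ∀ u, c * ‖B u‖ ≤ ‖K u‖)
    {s η : ℝ} (hs : s ≤ 1) (h : A.domain) (k : U) :
    s * (‖C (h : H)‖ ^ 2 - 2 * η * re ⟪A h, P (h : H)⟫_𝕜)
        - (s * η * (‖P‖ / c)) ^ 2 * ‖(h : H)‖ ^ 2 ≤
      dissipationForm A B C K (((s * η : ℝ) : 𝕜) • P) h k := by
  have hcross := two_mul_re_inner_le_sq_norm_add (P := ((s * η : ℝ) : 𝕜) • P) hc hKB (h : H) k
  rw [norm_smul, norm_ofReal, mul_div_assoc, mul_pow, sq_abs, ← mul_pow] at hcross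
  have hC : s * ‖C (h : H)‖ ^ 2 ≤ ‖C (h : H)‖ ^ 2 := mul_le_of_le_one_left (by positivity) hs
  simp only [dissipationForm, smul_apply, inner_add_left, map_add, inner_smul_right,
    re_ofReal_mul] at hcross ⊢
  linarith

theorem exists_smul_dissipationForm_coercive_iff {c : ℝ} (hc : 0 < c)
    (hKB : ∀ u, c * ‖B u‖ ≤ ‖K u‖) :
    (∃ γ : ℝ, 0 < γ ∧ ∃ m : ℝ, 0 < m ∧ ∀ (h : A.domain) (k : U),
        m * ‖(h : H)‖ ^ 2 ≤ dissipationForm A B C K ((γ : 𝕜) • P) h k) ↔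
      ∃ η : ℝ, 0 < η ∧ ∃ m : ℝ, 0 < m ∧ ∀ h : A.domain,
        m * ‖(h : H)‖ ^ 2 ≤ ‖C (h : H)‖ ^ 2 - 2 * η * re ⟪A h, P (h : H)⟫_𝕜 := by
  constructor
  · rintro ⟨γ, hγ, m, hm, hform⟩
    refine ⟨γ, hγ, m, hm, fun h ↦ ?_⟩
    simpa [dissipationForm, inner_smul_right, mul_assoc] using hform h 0
  · rintro ⟨η, hη, m, hm, hcoercive⟩
    obtain ⟨s, hs, hs_le_one, hsm⟩ := exists_pos_le_one_mul_lt hm (sq_nonneg (η * (‖P‖ / c)))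
    refine ⟨s * η, by positivity, s * (m - s * (η * (‖P‖ / c)) ^ 2),
      mul_pos hs (sub_pos.2 hsm), fun h k ↦ ?_⟩
    calc s * (m - s * (η * (‖P‖ / c)) ^ 2) * ‖(h : H)‖ ^ 2
        = s * (m * ‖(h : H)‖ ^ 2) - (s * η * (‖P‖ / c)) ^ 2 * ‖(h : H)‖ ^ 2 := by ring
      _ ≤ s * (‖C (h : H)‖ ^ 2 - 2 * η * re ⟪A h, P (h : H)⟫_𝕜)
            - (s * η * (‖P‖ / c)) ^ 2 * ‖(h : H)‖ ^ 2 := by gcongr; exact hcoercive h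
      _ ≤ dissipationForm A B C K (((s * η : ℝ) : 𝕜) • P) h k :=
          le_dissipationForm_smul hc hKB hs_le_one h k

/-- Strict pre-dissipativity at `(xe, ue)` with dissipation rate `α` and storage function
`V_{P,w} x = ⟨P x, x⟩ + 2 Re⟨w, x⟩`. The derivative of `V_{P,w}` along the dynamics is written out
as `2 Re⟨A x + B u, P x + w⟩`, its value for `G = H` and self-adjoint `P`; that `α` is of class `𝒦`
is a separate condition. -/
def IsStrictlyPreDissipative (A : H →ₗ.[𝕜] G) (B : U →L[𝕜] G) (C : H →L[𝕜] Y) (K : U →L[𝕜] Z)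
    (z : H) (v : U) (xe : H) (ue : U) (P : H →L[𝕜] G) (w : G) (α : ℝ → ℝ) : Prop :=
  ∀ (x : A.domain) (u : U),
    2 * re ⟪A x + B u, P (x : H) + w⟫_𝕜 ≤
      ell C K z v (x : H) u - ell C K z v xe ue - α ‖(x : H) - xe‖

end DissipationForm

section StrictPreDissipativity

variable {𝕜 H G U Y Z : Type*} [RCLike 𝕜]
  [NormedAddCommGroup H] [InnerProductSpace 𝕜 H] [CompleteSpace H]
  [NormedAddCommGroup G] [InnerProductSpace 𝕜 G]
  [NormedAddCommGroup U] [InnerProductSpace 𝕜 U] [CompleteSpace U]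
  [NormedAddCommGroup Y] [InnerProductSpace 𝕜 Y] [CompleteSpace Y]
  [NormedAddCommGroup Z] [InnerProductSpace 𝕜 Z] [CompleteSpace Z]
  {A : H →ₗ.[𝕜] G} {B : U →L[𝕜] G} {C : H →L[𝕜] Y} {K : U →L[𝕜] Z} {z : H} {v : U}
  {P : H →L[𝕜] G} {xe : H} {ue : U}

theorem ell_add_sub_ell (C : H →L[𝕜] Y) (K : U →L[𝕜] Z) (z : H) (v : U) (xe h : H) (ue k : U) :
    ell C K z v (xe + h) (ue + k) - ell C K z v xe ue =
      ‖C h‖ ^ 2 + ‖K k‖ ^ 2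
        + 2 * (re ⟪z + adjoint C (C xe), h⟫_𝕜 + re ⟪v + adjoint K (K ue), k⟫_𝕜) := by
  simp only [ell, map_add, @norm_add_sq 𝕜, inner_add_left, inner_add_right, adjoint_inner_left]
  ring

theorem isStrictlyPreDissipative_iff_dissipationForm {hxe : xe ∈ A.domain}
    (heq : A ⟨xe, hxe⟩ + B ue = 0) {w : G} {α : ℝ → ℝ} :
    IsStrictlyPreDissipative A B C K z v xe ue P w α ↔
      ∀ (h : A.domain) (k : U),
        α ‖(h : H)‖ ≤ dissipationForm A B C K P h k
          + 2 * (re ⟪z + adjoint C (C xe), (h : H)⟫_𝕜 + re ⟪v + adjoint K (K ue), k⟫_𝕜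
            - re ⟪A h + B k, P xe + w⟫_𝕜) := by
  have hdynamics (h : A.domain) (k : U) : A (⟨xe, hxe⟩ + h) + B (ue + k) = A h + B k := by
    rw [LinearPMap.map_add, map_add, add_add_add_comm, heq, zero_add]
  have hshift : IsStrictlyPreDissipative A B C K z v xe ue P w α ↔
      ∀ (h : A.domain) (k : U),
        2 * re ⟪A (⟨xe, hxe⟩ + h) + B (ue + k), P (xe + h) + w⟫_𝕜 ≤
          ell C K z v (xe + h) (ue + k) - ell C K z v xe ue - α ‖xe + (h : H) - xe‖ :=
    ⟨fun hd h k ↦ hd (⟨xe, hxe⟩ + h) (ue + k),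
      fun hd x u ↦ by simpa using hd (x - ⟨xe, hxe⟩) (u - ue)⟩
  rw [hshift]
  refine forall₂_congr fun h k ↦ ?_
  rw [hdynamics, ell_add_sub_ell, add_sub_cancel_left, dissipationForm, map_add,
    add_right_comm, add_comm (P xe + w), inner_add_right, map_add]
  constructor <;> intro <;> linarith

variable [CompleteSpace G]

theorem IsStrictlyPreDissipative.isMultiplier (hA : Dense (A.domain : Set H))
    {hxe : xe ∈ A.domain} (heq : A ⟨xe, hxe⟩ + B ue = 0) {w : G} {α : ℝ → ℝ}
    (hα : ∀ r, 0 ≤ r → 0 ≤ α r) (hd : IsStrictlyPreDissipative A B C K z v xe ue P w α) :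
    IsMultiplier A B (z + adjoint C (C xe)) (v + adjoint K (K ue)) (P xe + w) := by
  rw [isMultiplier_iff_forall_re_inner hA]
  intro h k
  have hlinear : 2 * (re ⟪z + adjoint C (C xe), (h : H)⟫_𝕜 + re ⟪v + adjoint K (K ue), k⟫_𝕜
      - re ⟪A h + B k, P xe + w⟫_𝕜) = 0 := by
    refine eq_zero_of_forall_nonneg_sq_mul_add_mul (a := dissipationForm A B C K P h k) fun t ↦ ?_
    have hscaled := (hα _ (norm_nonneg _)).trans
      ((isStrictlyPreDissipative_iff_dissipationForm heq).1 hd ((t : 𝕜) • h) ((t : 𝕜) • k))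
    simp only [dissipationForm_ofReal_smul, LinearPMap.map_smul, Submodule.coe_smul, map_smul,
      ← smul_add, inner_smul_left, inner_smul_right, conj_ofReal, re_ofReal_mul] at hscaled
    linarith
  linarith

theorem isStrictlyPreDissipative_iff_of_isMultiplier (hA : Dense (A.domain : Set H))
    {hxe : xe ∈ A.domain} (heq : A ⟨xe, hxe⟩ + B ue = 0) {w : G} {α : ℝ → ℝ}
    (hw : IsMultiplier A B (z + adjoint C (C xe)) (v + adjoint K (K ue)) (P xe + w)) :
    IsStrictlyPreDissipative A B C K z v xe ue P w α ↔
      ∀ (h : A.domain) (k : U), α ‖(h : H)‖ ≤ dissipationForm A B C K P h k := by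
  rw [isMultiplier_iff_forall_re_inner hA] at hw
  simp only [isStrictlyPreDissipative_iff_dissipationForm heq, hw, sub_self, mul_zero, add_zero]

theorem exists_isStrictlyPreDissipative_iff (hA : Dense (A.domain : Set H))
    {hxe : xe ∈ A.domain} (heq : A ⟨xe, hxe⟩ + B ue = 0) :
    (∃ w : G, ∃ α : ℝ → ℝ, IsClassK α ∧ IsStrictlyPreDissipative A B C K z v xe ue P w α) ↔
      (∃ w : G, IsMultiplier A B (z + adjoint C (C xe)) (v + adjoint K (K ue)) w) ∧
        ∃ m : ℝ, 0 < m ∧ ∀ (h : A.domain) (k : U),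
          m * ‖(h : H)‖ ^ 2 ≤ dissipationForm A B C K P h k := by
  constructor
  · rintro ⟨w, α, hα, hd⟩
    have hw := hd.isMultiplier hA heq fun _ ↦ hα.nonneg
    exact ⟨⟨P xe + w, hw⟩, α 1, hα.pos one_pos, mul_sq_norm_le_dissipationForm (hα.nonneg le_rfl)
      ((isStrictlyPreDissipative_iff_of_isMultiplier hA heq hw).1 hd)⟩
  · rintro ⟨⟨w, hw⟩, m, hm, hform⟩
    rw [← add_sub_cancel (P xe) w] at hw
    exact ⟨w - P xe, fun r ↦ m * r ^ 2, isClassK_const_mul_sq hm,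
      (isStrictlyPreDissipative_iff_of_isMultiplier hA heq hw).2 hform⟩

theorem strict_predissipativity_scaled_quadratic_storage_iff_general
    (hA : Dense (A.domain : Set H)) {c : ℝ} (hc : 0 < c) (hKB : ∀ u, c * ‖B u‖ ≤ ‖K u‖)
    {hxe : xe ∈ A.domain} (heq : A ⟨xe, hxe⟩ + B ue = 0) :
    (∃ γ : ℝ, 0 < γ ∧ ∃ w : G, ∃ α : ℝ → ℝ, IsClassK α ∧
        IsStrictlyPreDissipative A B C K z v xe ue ((γ : 𝕜) • P) w α) ↔
      (∃ w : G, IsMultiplier A B (z + adjoint C (C xe)) (v + adjoint K (K ue)) w) ∧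
        ∃ η : ℝ, 0 < η ∧ ∃ m : ℝ, 0 < m ∧ ∀ x : A.domain,
          m * ‖(x : H)‖ ^ 2 ≤ ‖C (x : H)‖ ^ 2 - 2 * η * re ⟪A x, P (x : H)⟫_𝕜 := by
  rw [← exists_smul_dissipationForm_coercive_iff hc hKB, ← exists_and_left]
  exact exists_congr fun γ ↦ by rw [exists_isStrictlyPreDissipative_iff hA heq, and_left_comm]

end StrictPreDissipativity

/-- **Theorem 4.5**: characterization of strict pre-dissipativity at a controlled
equilibrium `(x_e, u_e)` with a scaled quadratic storage function `V_{γP,w}`. -/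
theorem strict_predissipativity_scaled_quadratic_storage_iff
    {𝕜 H U Y Z : Type*} [RCLike 𝕜]
    [NormedAddCommGroup H] [InnerProductSpace 𝕜 H] [CompleteSpace H]
    [NormedAddCommGroup U] [InnerProductSpace 𝕜 U] [CompleteSpace U]
    [NormedAddCommGroup Y] [InnerProductSpace 𝕜 Y] [CompleteSpace Y]
    [NormedAddCommGroup Z] [InnerProductSpace 𝕜 Z] [CompleteSpace Z]
    (A : H →ₗ.[𝕜] H) (hA : Dense (A.domain : Set H))
    (B : U →L[𝕜] H) (C : H →L[𝕜] Y) (K : U →L[𝕜] Z) (z : H) (v : U)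
    (cK : ℝ) (hcK : 0 < cK) (hKB : ∀ u : U, cK * ‖B u‖ ≤ ‖K u‖)
    (P : H →L[𝕜] H) (hP : IsSelfAdjoint P)
    (xe : H) (ue : U) (hxe : xe ∈ A.domain) (heq : A ⟨xe, hxe⟩ + B ue = 0) :
    (∃ γ : ℝ, 0 < γ ∧ ∃ w : H, ∃ α : ℝ → ℝ, IsClassK α ∧
      ∀ (x : A.domain) (u : U),
        2 * re ⟪A x + B u, (γ : 𝕜) • P (x : H) + w⟫_𝕜 ≤
          ell C K z v (x : H) u - ell C K z v xe ue - α ‖(x : H) - xe‖)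
    ↔
    ((∃ w' : H, ∃ hw' : w' ∈ A.adjoint.domain,
        A.adjoint ⟨w', hw'⟩ = z + adjoint C (C xe) ∧
        adjoint B w' = v + adjoint K (K ue)) ∧
      ∃ η : ℝ, 0 < η ∧ ∃ m : ℝ, 0 < m ∧
        ∀ x : A.domain,
          m * ‖(x : H)‖ ^ 2 ≤ ‖C (x : H)‖ ^ 2 - 2 * η * re ⟪A x, P (x : H)⟫_𝕜) :=
  strict_predissipativity_scaled_quadratic_storage_iff_general hA hcK hKB heq
end

section
/- From a Lyapunov equality for an output-injected operator to the Lyapunov-like form inequality (first part of Theorem 5.2, stated via the Lyapunov characterization of exponential stability): Let H and Y be Hilbert spaces over 𝕜 (𝕜 = ℝ or ℂ), A a densely defined linear operator in H with domain dom A, C : H → Y bounded, F : Y → H bounded, and P a bounded positive self-adjoint operator on H (⟨Px,x⟩ > 0 for all x ≠ 0) such that 2Re⟨Ax + F(Cx), Px⟩ = −‖x‖² for all x ∈ dom A. Then there exist η > 0 and m > 0 such that ‖Cx‖² − 2η Re⟨Ax, Px⟩ ≥ m‖x‖² for all x ∈ dom A. -/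
open scoped InnerProductSpace
open RCLike ContinuousLinearMap

/-!
The hypothesis splits as `-2η Re⟨Ax, Px⟩ = η‖x‖² + 2η Re⟨F(Cx), Px⟩`. By Cauchy-Schwarz and Young's
inequality the cross term is at least `-‖Cx‖² - (ηK)²‖x‖²` with `K = ‖F‖‖P‖`, so the inequality
holds with `m = η - (ηK)²`. This is positive for small `η`, since the loss is quadratic in `η` while
the gain is linear.
-/

lemma exists_pos_sub_mul_sq_pos (K : ℝ) : ∃ η : ℝ, 0 < η ∧ 0 < η - (η * K) ^ 2 := by
  have hK : 0 < K ^ 2 + 1 := by positivity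
  refine ⟨(K ^ 2 + 1)⁻¹, inv_pos.mpr hK, ?_⟩
  have margin_eq : (K ^ 2 + 1)⁻¹ - ((K ^ 2 + 1)⁻¹ * K) ^ 2 = ((K ^ 2 + 1)⁻¹) ^ 2 := by
    field_simp
    ring
  rw [margin_eq]
  positivity

section

variable {𝕜 H X Y : Type*} [RCLike 𝕜]
  [SeminormedAddCommGroup H] [InnerProductSpace 𝕜 H]
  [SeminormedAddCommGroup X] [NormedSpace 𝕜 X]
  [SeminormedAddCommGroup Y] [NormedSpace 𝕜 Y]

lemma abs_re_inner_apply_apply_le (F : Y →L[𝕜] H) (P : X →L[𝕜] H) (y : Y) (x : X) :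
    |re ⟪F y, P x⟫_𝕜| ≤ ‖F‖ * ‖P‖ * (‖y‖ * ‖x‖) :=
  calc |re ⟪F y, P x⟫_𝕜| ≤ ‖⟪F y, P x⟫_𝕜‖ := abs_re_le_norm _
    _ ≤ ‖F y‖ * ‖P x‖ := norm_inner_le_norm _ _
    _ ≤ (‖F‖ * ‖y‖) * (‖P‖ * ‖x‖) := by gcongr <;> exact le_opNorm _ _
    _ = ‖F‖ * ‖P‖ * (‖y‖ * ‖x‖) := by ring

lemma abs_two_mul_re_inner_apply_apply_le (F : Y →L[𝕜] H) (P : X →L[𝕜] H) (y : Y) (x : X)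
    (η : ℝ) :
    |2 * η * re ⟪F y, P x⟫_𝕜| ≤ ‖y‖ ^ 2 + (η * (‖F‖ * ‖P‖)) ^ 2 * ‖x‖ ^ 2 :=
  calc |2 * η * re ⟪F y, P x⟫_𝕜| = 2 * |η| * |re ⟪F y, P x⟫_𝕜| := by
        rw [abs_mul, abs_mul, abs_two]
    _ ≤ 2 * |η| * (‖F‖ * ‖P‖ * (‖y‖ * ‖x‖)) := by
        gcongr
        exact abs_re_inner_apply_apply_le F P y x
    _ = 2 * ‖y‖ * (|η| * (‖F‖ * ‖P‖) * ‖x‖) := by ring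
    _ ≤ ‖y‖ ^ 2 + (|η| * (‖F‖ * ‖P‖) * ‖x‖) ^ 2 := two_mul_le_add_sq _ _
    _ = ‖y‖ ^ 2 + (η * (‖F‖ * ‖P‖)) ^ 2 * ‖x‖ ^ 2 := by
        rw [mul_pow, mul_pow, sq_abs, ← mul_pow]

lemma mul_norm_sq_le_of_two_mul_re_inner_add_apply_le (F : Y →L[𝕜] H) (P : X →L[𝕜] H)
    {a : H} {x : X} {y : Y} (h : 2 * re ⟪a + F y, P x⟫_𝕜 ≤ -‖x‖ ^ 2) {η : ℝ} (hη : 0 ≤ η) :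
    (η - (η * (‖F‖ * ‖P‖)) ^ 2) * ‖x‖ ^ 2 ≤ ‖y‖ ^ 2 - 2 * η * re ⟪a, P x⟫_𝕜 := by
  have dissipation : η * (2 * (re ⟪a, P x⟫_𝕜 + re ⟪F y, P x⟫_𝕜)) ≤ η * -‖x‖ ^ 2 := by
    rw [← map_add, ← inner_add_left]
    exact mul_le_mul_of_nonneg_left h hη
  have cross_term := neg_le_of_abs_le (abs_two_mul_re_inner_apply_apply_le F P y x η)
  linarith

theorem lyapunov_form_inequality_of_detectability_general
    (A : H →ₗ.[𝕜] H) (C : A.domain →ₗ[𝕜] Y) (F : Y →L[𝕜] H) (P : H →L[𝕜] H)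
    (hLyap : ∀ x : A.domain, 2 * re ⟪A x + F (C x), P (x : H)⟫_𝕜 ≤ -‖(x : H)‖ ^ 2) :
    ∃ η : ℝ, 0 < η ∧ ∃ m : ℝ, 0 < m ∧
      ∀ x : A.domain,
        m * ‖(x : H)‖ ^ 2 ≤ ‖C x‖ ^ 2 - 2 * η * re ⟪A x, P (x : H)⟫_𝕜 := by
  obtain ⟨η, hη, hm⟩ := exists_pos_sub_mul_sq_pos (‖F‖ * ‖P‖)
  exact ⟨η, hη, _, hm, fun x ↦
    mul_norm_sq_le_of_two_mul_re_inner_add_apply_le F P (hLyap x) hη.le⟩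

end

/-- **Theorem 5.2, first part** (via the Lyapunov characterization of exponential
stability): if there are a bounded output injection `F` and a bounded positive
self-adjoint `P` with `2Re⟨(A + FC)x, Px⟩ = -‖x‖²` on `dom A` (i.e. `(A,C)` is
exponentially detectable), then the Lyapunov-like form inequality
`‖Cx‖² - 2η Re⟨Ax, Px⟩ ≥ m‖x‖²` holds on `dom A` for some `η, m > 0`. -/
theorem lyapunov_form_inequality_of_detectability
    {𝕜 H Y : Type*} [RCLike 𝕜]
    [NormedAddCommGroup H] [InnerProductSpace 𝕜 H] [CompleteSpace H]
    [NormedAddCommGroup Y] [InnerProductSpace 𝕜 Y] [CompleteSpace Y]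
    (A : H →ₗ.[𝕜] H) (hA : Dense (A.domain : Set H))
    (C : H →L[𝕜] Y) (F : Y →L[𝕜] H)
    (P : H →L[𝕜] H) (hP : IsSelfAdjoint P)
    (hPpos : ∀ x : H, x ≠ 0 → 0 < re ⟪P x, x⟫_𝕜)
    (hLyap : ∀ x : A.domain, 2 * re ⟪A x + F (C (x : H)), P (x : H)⟫_𝕜 = -‖(x : H)‖ ^ 2) :
    ∃ η : ℝ, 0 < η ∧ ∃ m : ℝ, 0 < m ∧
      ∀ x : A.domain,
        m * ‖(x : H)‖ ^ 2 ≤ ‖C (x : H)‖ ^ 2 - 2 * η * re ⟪A x, P (x : H)⟫_𝕜 := by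
  exact lyapunov_form_inequality_of_detectability_general A (C.toLinearMap ∘ₗ A.domain.subtype) F P
    fun x ↦ (hLyap x).le
end

section
/- From the Lyapunov-like form inequality to an exponentially stabilizing output injection (second part of Theorem 5.2, stated via the Lyapunov characterization of exponential stability): Let H and Y be Hilbert spaces over 𝕜 (𝕜 = ℝ or ℂ), A a densely defined linear operator in H with domain dom A, C : H → Y bounded, P a bounded non-negative self-adjoint operator on H, and m > 0 such that ‖Cx‖² − 2Re⟨Ax, Px⟩ ≥ m‖x‖² for all x ∈ dom A. Assume moreover that ran C* ⊆ ran P, where C* is the adjoint of C. Then there exists a bounded linear operator F : Y → H such that 2Re⟨Ax + F(Cx), Px⟩ ≤ −m‖x‖² for all x ∈ dom A. -/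
open scoped InnerProductSpace
open RCLike ContinuousLinearMap

/-!
If `P* ∘ G = C*`, then `⟪G (C x), P x⟫ = ‖C x‖²`, so the output injection `F = -G / 2` contributes
exactly `-‖C x‖²` to `2 Re ⟪A x + F (C x), P x⟫`, and the conclusion is the given inequality
rearranged. Such a bounded `G` comes from the Douglas factorization lemma: an operator whose range
lies in that of `T` factors through the restriction of `T` to a closed complement of its kernel.
There `T` is injective, so the factor is unique and has a closed graph.
-/

section Factorization

variable {𝕜 E F G : Type*} [NontriviallyNormedField 𝕜]
  [NormedAddCommGroup E] [NormedSpace 𝕜 E] [CompleteSpace E]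
  [NormedAddCommGroup F] [NormedSpace 𝕜 F] [CompleteSpace F]
  [AddCommGroup G] [Module 𝕜 G] [TopologicalSpace G] [T2Space G]

theorem exists_comp_eq_of_range_le_of_injective (T : E →L[𝕜] G) (S : F →L[𝕜] G)
    (hT : Function.Injective T) (hST : S.range ≤ T.range) :
    ∃ X : F →L[𝕜] E, T ∘L X = S := by
  let e : E ≃ₗ[𝕜] T.range := LinearEquiv.ofInjective (T : E →ₗ[𝕜] G) hT
  let X : F →ₗ[𝕜] E :=
    e.symm.toLinearMap ∘ₗ (S : F →ₗ[𝕜] G).codRestrict T.range fun y ↦ hST ⟨y, rfl⟩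
  have apply_X (y : F) : T (X y) = S y :=
    LinearEquiv.ofInjective_symm_apply (T : E →ₗ[𝕜] G) (h := hT) _
  have graph_eq : (X.graph : Set (F × E)) = {p | T p.2 = S p.1} := by
    ext p
    simp only [SetLike.mem_coe, LinearMap.mem_graph_iff, Set.mem_ofPred_eq, ← apply_X, hT.eq_iff]
  have isClosed_graph : IsClosed (X.graph : Set (F × E)) :=
    graph_eq ▸ isClosed_eq (by fun_prop) (by fun_prop)
  exact ⟨ofIsClosedGraph isClosed_graph, ContinuousLinearMap.ext apply_X⟩

theorem exists_comp_eq_of_range_le_of_closedComplemented_ker (T : E →L[𝕜] G) (S : F →L[𝕜] G)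
    (hT : T.ker.ClosedComplemented) (hST : S.range ≤ T.range) :
    ∃ X : F →L[𝕜] E, T ∘L X = S := by
  obtain ⟨M, isClosed_M, isCompl_M⟩ := hT.exists_isClosed_isCompl
  have : CompleteSpace M := isClosed_M.completeSpace_coe
  have injective_restrict : Function.Injective (T ∘L M.subtypeL) :=
    LinearMap.injective_domRestrict_iff.mpr isCompl_M.disjoint.symm
  have range_restrict : (T ∘L M.subtypeL).range = T.range :=
    calc (T ∘L M.subtypeL).range
      _ = M.map (T : E →ₗ[𝕜] G) := LinearMap.range_domRestrict M (T : E →ₗ[𝕜] G)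
      _ = (T.ker ⊔ M).map (T : E →ₗ[𝕜] G) := by
        rw [Submodule.map_sup, LinearMap.le_ker_iff_map.mp le_rfl, bot_sup_eq]
      _ = T.range := by rw [isCompl_M.sup_eq_top, Submodule.map_top]
  obtain ⟨X, hX⟩ := exists_comp_eq_of_range_le_of_injective (T ∘L M.subtypeL) S
    injective_restrict (hST.trans_eq range_restrict.symm)
  exact ⟨M.subtypeL ∘L X, hX⟩

end Factorization

section Hilbert

variable {𝕜 H K Y : Type*} [RCLike 𝕜]
  [NormedAddCommGroup H] [InnerProductSpace 𝕜 H] [CompleteSpace H]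
  [NormedAddCommGroup K] [InnerProductSpace 𝕜 K] [CompleteSpace K]
  [NormedAddCommGroup Y] [InnerProductSpace 𝕜 Y] [CompleteSpace Y]

theorem closedComplemented_of_isClosed {M : Submodule 𝕜 H} (hM : IsClosed (M : Set H)) :
    M.ClosedComplemented :=
  have : CompleteSpace M := hM.completeSpace_coe
  M.isTopCompl_orthogonal.closedComplemented

theorem inner_apply_apply_of_adjoint_comp_eq {P : H →L[𝕜] K} {C : H →L[𝕜] Y} {G : Y →L[𝕜] K}
    (hG : adjoint P ∘L G = adjoint C) (y : Y) (x : H) : ⟪G y, P x⟫_𝕜 = ⟪y, C x⟫_𝕜 := by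
  rw [← adjoint_inner_left, ← comp_apply, hG, adjoint_inner_left]

theorem exists_two_mul_re_inner_add_eq_sub_norm_sq (P : H →L[𝕜] K) (C : H →L[𝕜] Y)
    (hran : (adjoint C).range ≤ (adjoint P).range) :
    ∃ F : Y →L[𝕜] K, ∀ (x : H) (z : K),
      2 * re ⟪z + F (C x), P x⟫_𝕜 = 2 * re ⟪z, P x⟫_𝕜 - ‖C x‖ ^ 2 := by
  obtain ⟨G, hG⟩ := exists_comp_eq_of_range_le_of_closedComplemented_ker (adjoint P) (adjoint C)
    (closedComplemented_of_isClosed (adjoint P).isClosed_ker) hran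
  refine ⟨-((2⁻¹ : ℝ) : 𝕜) • G, fun x z ↦ ?_⟩
  have re_inner_G : re ⟪G (C x), P x⟫_𝕜 = ‖C x‖ ^ 2 := by
    rw [inner_apply_apply_of_adjoint_comp_eq hG, inner_self_eq_norm_sq]
  rw [inner_add_left, smul_apply, inner_smul_left, map_neg, conj_ofReal, neg_mul, map_add, map_neg,
    re_ofReal_mul, re_inner_G]
  ring

theorem detectability_of_lyapunov_form_inequality_general {D : Set H} (A : D → K)
    (C : H →L[𝕜] Y) (P : H →L[𝕜] K) (m : ℝ)
    (hLyap : ∀ x : D, m * ‖(x : H)‖ ^ 2 ≤ ‖C x‖ ^ 2 - 2 * re ⟪A x, P x⟫_𝕜)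
    (hran : (adjoint C).range ≤ (adjoint P).range) :
    ∃ F : Y →L[𝕜] K, ∀ x : D,
      2 * re ⟪A x + F (C x), P x⟫_𝕜 ≤ -(m * ‖(x : H)‖ ^ 2) := by
  obtain ⟨F, hF⟩ := exists_two_mul_re_inner_add_eq_sub_norm_sq P C hran
  refine ⟨F, fun x ↦ ?_⟩
  rw [hF]
  linarith [hLyap x]

end Hilbert

/-- **Theorem 5.2, second part** (via the Lyapunov characterization of exponential
stability): if the Lyapunov-like form inequality `‖Cx‖² - 2Re⟨Ax, Px⟩ ≥ m‖x‖²` holds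
on `dom A` with a bounded non-negative self-adjoint `P` satisfying `ran C* ⊆ ran P`,
then there is a bounded output injection `F` with
`2Re⟨(A + FC)x, Px⟩ ≤ -m‖x‖²` on `dom A` (exponential detectability of `(A,C)`). -/
theorem detectability_of_lyapunov_form_inequality
    {𝕜 H Y : Type*} [RCLike 𝕜]
    [NormedAddCommGroup H] [InnerProductSpace 𝕜 H] [CompleteSpace H]
    [NormedAddCommGroup Y] [InnerProductSpace 𝕜 Y] [CompleteSpace Y]
    (A : H →ₗ.[𝕜] H) (hA : Dense (A.domain : Set H))
    (C : H →L[𝕜] Y)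
    (P : H →L[𝕜] H) (hP : IsSelfAdjoint P)
    (hPnonneg : ∀ x : H, 0 ≤ re ⟪P x, x⟫_𝕜)
    (m : ℝ) (hm : 0 < m)
    (hLyap : ∀ x : A.domain,
      m * ‖(x : H)‖ ^ 2 ≤ ‖C (x : H)‖ ^ 2 - 2 * re ⟪A x, P (x : H)⟫_𝕜)
    (hran : Set.range (adjoint C : Y → H) ⊆ Set.range (P : H → H)) :
    ∃ F : Y →L[𝕜] H, ∀ x : A.domain,
      2 * re ⟪A x + F (C (x : H)), P (x : H)⟫_𝕜 ≤ -(m * ‖(x : H)‖ ^ 2) := by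
  exact detectability_of_lyapunov_form_inequality_general A C P m hLyap
    (hP.adjoint_eq.symm ▸ hran)
end

section
/- Existence, uniqueness and optimality condition for the optimal steady state problem (Lemma 4.6): Assume A is densely defined and closed, K is coercive (there is c > 0 with ‖Ku‖ ≥ c‖u‖ for all u ∈ U), and there exist a bounded self-adjoint operator P on H and η, m > 0 such that ‖Cx‖² − 2η Re⟨Ax, Px⟩ ≥ m‖x‖² for all x ∈ dom A. Then the optimal steady state problem, i.e. minimizing ℓ(x,u) over the set 𝒳 := {(x,u) ∈ dom A × U : Ax + Bu = 0}, has a unique solution (x_e,u_e) ∈ 𝒳, and this solution satisfies ⟨x, z + C*C x_e⟩ + ⟨u, v + K*K u_e⟩ = 0 for every (x,u) ∈ 𝒳. -/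
open scoped InnerProductSpace
open RCLike ContinuousLinearMap

/-!
On `WithLp 2 (H × U)` the cost has the form `s ↦ ‖T s‖² + 2 Re⟪w, s⟫` with `T = C ⊕ K` and
`w = (z, v)`. By Cauchy-Schwarz the Lyapunov inequality yields `κ ‖x‖ ≤ ‖C x‖ + ‖A x‖` on `dom A`.
Since `A x = -B u` on `𝒳` and `K` bounds `u`, the operator `T` is bounded below on the closed
subspace `𝒳`. The form `⟪T s, T t⟫` is then coercive on `𝒳`, so there is `s ∈ 𝒳` with
`⟪w, t⟫ + ⟪T s, T t⟫ = 0` for all `t ∈ 𝒳`. Completing the square around `s`, the cost at `t ∈ 𝒳`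
exceeds the cost at `s` by exactly `‖T (t - s)‖²`.
-/

section QuadraticCost

variable {𝕜 E F : Type*} [RCLike 𝕜]
  [NormedAddCommGroup E] [InnerProductSpace 𝕜 E]
  [NormedAddCommGroup F] [InnerProductSpace 𝕜 F]

theorem exists_forall_inner_map_map_eq_of_bounded_below [CompleteSpace E] (T : E →L[𝕜] F)
    {κ : ℝ} (hκ : 0 < κ) (hT : ∀ x, κ * ‖x‖ ≤ ‖T x‖) (φ : StrongDual 𝕜 E) :
    ∃ x, ∀ y, ⟪T x, T y⟫_𝕜 = φ y := by
  -- `G` is `T* T`, obtained from the form `⟪T x, T y⟫` because `F` need not be complete.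
  let G : E →L[𝕜] E := InnerProductSpace.continuousLinearMapOfBilin ((toSesqForm T).comp T)
  have inner_G (x y : E) : ⟪G x, y⟫_𝕜 = ⟪T x, T y⟫_𝕜 :=
    InnerProductSpace.continuousLinearMapOfBilin_apply _ x y
  have isUnit_G : IsUnit G := by
    refine isUnit_of_forall_le_norm_inner_map G (c := ⟨κ ^ 2, by positivity⟩)
      (show (0 : ℝ) < κ ^ 2 by positivity) fun x ↦ ?_
    calc ‖x‖ ^ 2 * κ ^ 2 = (κ * ‖x‖) ^ 2 := by ring
      _ ≤ ‖T x‖ ^ 2 := by gcongr; exact hT x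
      _ = ‖⟪G x, x⟫_𝕜‖ := by rw [inner_G, ← inner_self_re_eq_norm, inner_self_eq_norm_sq]
  obtain ⟨x, hx⟩ := (isUnit_iff_bijective.mp isUnit_G).surjective
    ((InnerProductSpace.toDual 𝕜 E).symm φ)
  exact ⟨x, fun y ↦ by rw [← inner_G, hx, InnerProductSpace.toDual_symm_apply]⟩

/-- The functional `x ↦ ‖T x‖² + 2 Re⟪w, x⟫`: the stage cost `ell` in terms of a single operator
and a single linear term. -/
noncomputable def quadraticCost (T : E →L[𝕜] F) (w x : E) : ℝ :=
  ‖T x‖ ^ 2 + 2 * re ⟪w, x⟫_𝕜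

theorem quadraticCost_add (T : E →L[𝕜] F) (w x d : E) :
    quadraticCost T w (x + d) =
      quadraticCost T w x + ‖T d‖ ^ 2 + 2 * re (⟪w, d⟫_𝕜 + ⟪T x, T d⟫_𝕜) := by
  simp only [quadraticCost, map_add, norm_add_sq (𝕜 := 𝕜), inner_add_right]
  ring

theorem exists_unique_isMinOn_quadraticCost (S : Submodule 𝕜 E) [CompleteSpace S]
    (T : E →L[𝕜] F) (w : E) {κ : ℝ} (hκ : 0 < κ) (hT : ∀ s ∈ S, κ * ‖s‖ ≤ ‖T s‖) :
    ∃ s ∈ S, IsMinOn (quadraticCost T w) S s ∧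
      (∀ t ∈ S, IsMinOn (quadraticCost T w) S t → t = s) ∧
      ∀ t ∈ S, ⟪w, t⟫_𝕜 + ⟪T s, T t⟫_𝕜 = 0 := by
  obtain ⟨⟨s, hs⟩, hφ⟩ := exists_forall_inner_map_map_eq_of_bounded_below
    (T.comp S.subtypeL) hκ (fun t ↦ hT t t.2) (-(innerSL 𝕜 w).comp S.subtypeL)
  have stationary (t : E) (ht : t ∈ S) : ⟪w, t⟫_𝕜 + ⟪T s, T t⟫_𝕜 = 0 := by
    rw [add_comm]
    exact eq_neg_iff_add_eq_zero.mp (hφ ⟨t, ht⟩)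
  have cost_eq (t : E) (ht : t ∈ S) :
      quadraticCost T w t = quadraticCost T w s + ‖T (t - s)‖ ^ 2 := by
    have h := quadraticCost_add T w s (t - s)
    rwa [stationary _ (S.sub_mem ht hs), map_zero, mul_zero, add_zero, add_sub_cancel] at h
  refine ⟨s, hs, fun t ht ↦ ?_, fun t ht hmin ↦ ?_, stationary⟩
  · exact (le_add_of_nonneg_right (sq_nonneg _)).trans_eq (cost_eq t ht).symm
  · have hle : quadraticCost T w t ≤ quadraticCost T w s := hmin hs
    have map_sub_eq_zero : ‖T (t - s)‖ = 0 := by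
      rw [cost_eq t ht] at hle
      exact pow_eq_zero_iff two_ne_zero |>.mp (le_antisymm (by linarith) (sq_nonneg _))
    have norm_sub_le : κ * ‖t - s‖ ≤ 0 := map_sub_eq_zero ▸ hT _ (S.sub_mem ht hs)
    exact sub_eq_zero.mp (norm_le_zero_iff.mp (nonpos_of_mul_nonpos_right norm_sub_le hκ))

end QuadraticCost

section Lyapunov

theorem mul_le_add_of_mul_sq_le_sq_add {m β κ q a x : ℝ} (hβ : 0 ≤ β) (hκ : 0 < κ)
    (hκm : κ * (κ + β) ≤ m) (hq : 0 ≤ q) (ha : 0 ≤ a) (h : m * x ^ 2 ≤ q ^ 2 + β * a * x) :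
    κ * x ≤ q + a := by
  by_contra! hlt
  have hx : 0 < x := pos_of_mul_pos_right (by linarith) hκ.le
  have : q ^ 2 + β * a * x < m * x ^ 2 :=
    calc q ^ 2 + β * a * x < (κ * x) ^ 2 + β * (κ * x) * x := by
          have hqx : q < κ * x := by linarith
          have hax : a ≤ κ * x := by linarith
          exact add_lt_add_of_lt_of_le (by gcongr) (by gcongr)
      _ = κ * (κ + β) * x ^ 2 := by ring
      _ ≤ m * x ^ 2 := by gcongr
  linarith

variable {𝕜 H X Y : Type*} [RCLike 𝕜]
  [NormedAddCommGroup H] [NormedSpace 𝕜 H]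
  [NormedAddCommGroup X] [InnerProductSpace 𝕜 X]
  [NormedAddCommGroup Y] [NormedSpace 𝕜 Y]

theorem exists_pos_mul_norm_le_of_lyapunov (A : H →ₗ.[𝕜] X) (C : H →L[𝕜] Y) (P : H →L[𝕜] X)
    (r : ℝ) {m : ℝ} (hm : 0 < m)
    (hLyap : ∀ x : A.domain,
      m * ‖(x : H)‖ ^ 2 ≤ ‖C (x : H)‖ ^ 2 - r * re ⟪A x, P (x : H)⟫_𝕜) :
    ∃ κ > 0, ∀ x : A.domain, κ * ‖(x : H)‖ ≤ ‖C (x : H)‖ + ‖A x‖ := by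
  set β : ℝ := |r| * ‖P‖
  have hβ : 0 ≤ β := by positivity
  set κ : ℝ := min 1 (m / (1 + β))
  have hκ : 0 < κ := by positivity
  have hκm : κ * (κ + β) ≤ m :=
    calc κ * (κ + β) ≤ m / (1 + β) * (1 + β) := by
          gcongr
          exacts [min_le_right _ _, min_le_left _ _]
      _ = m := div_mul_cancel₀ _ (by positivity)
  refine ⟨κ, hκ, fun x ↦
    mul_le_add_of_mul_sq_le_sq_add hβ hκ hκm (norm_nonneg _) (norm_nonneg _) ?_⟩
  have cross_term : -(r * re ⟪A x, P (x : H)⟫_𝕜) ≤ β * ‖A x‖ * ‖(x : H)‖ :=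
    calc -(r * re ⟪A x, P (x : H)⟫_𝕜) ≤ |r| * |re ⟪A x, P (x : H)⟫_𝕜| := by
          rw [← abs_mul]
          exact neg_le_abs _
      _ ≤ |r| * (‖A x‖ * (‖P‖ * ‖(x : H)‖)) := by
          gcongr
          exact (abs_re_le_norm _).trans <| (norm_inner_le_norm _ _).trans <| by
            gcongr
            exact P.le_opNorm _
      _ = β * ‖A x‖ * ‖(x : H)‖ := by ring
  linarith [hLyap x]

end Lyapunov

theorem norm_withLp_prod_le_add {α β : Type*} [SeminormedAddCommGroup α]
    [SeminormedAddCommGroup β] (p : ENNReal) [Fact (1 ≤ p)] (s : WithLp p (α × β)) :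
    ‖s‖ ≤ ‖s.fst‖ + ‖s.snd‖ :=
  calc ‖s‖ = ‖WithLp.toLp p (s.fst, (0 : β)) + WithLp.toLp p ((0 : α), s.snd)‖ := by
        simp only [← WithLp.toLp_add, Prod.mk_add_mk, add_zero, zero_add]
        rfl
    _ ≤ ‖s.fst‖ + ‖s.snd‖ := by
        simpa only [WithLp.norm_toLp_fst, WithLp.norm_toLp_snd] using norm_add_le
          (WithLp.toLp p (s.fst, (0 : β))) (WithLp.toLp p ((0 : α), s.snd))

section SteadyStates

variable {𝕜 H U X Y Z : Type*} [RCLike 𝕜]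
  [NormedAddCommGroup H] [NormedSpace 𝕜 H]
  [NormedAddCommGroup U] [NormedSpace 𝕜 U]
  [NormedAddCommGroup X] [NormedSpace 𝕜 X]
  [NormedAddCommGroup Y] [NormedSpace 𝕜 Y]
  [NormedAddCommGroup Z] [NormedSpace 𝕜 Z]

/-- The subspace `𝒳 = ker [A B]` of pairs `(x, u) ∈ dom A × U` with `A x + B u = 0`, encoded as
the pairs for which `(x, -B u)` lies in the graph of `A`. -/
def steadyStates (A : H →ₗ.[𝕜] X) (B : U →L[𝕜] X) : Submodule 𝕜 (WithLp 2 (H × U)) :=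
  A.graph.comap ((WithLp.fstL 2 𝕜 H U).prod (-(B.comp (WithLp.sndL 2 𝕜 H U)))).toLinearMap

theorem mem_steadyStates {A : H →ₗ.[𝕜] X} {B : U →L[𝕜] X} {s : WithLp 2 (H × U)} :
    s ∈ steadyStates A B ↔ ∃ hx : s.fst ∈ A.domain, A ⟨s.fst, hx⟩ + B s.snd = 0 := by
  change (s.fst, -B s.snd) ∈ A.graph ↔ _
  simp only [LinearPMap.mem_graph_iff, Subtype.exists, exists_and_left, exists_eq_left,
    eq_neg_iff_add_eq_zero]

theorem isClosed_steadyStates {A : H →ₗ.[𝕜] X} (hA : A.IsClosed) (B : U →L[𝕜] X) :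
    IsClosed (steadyStates A B : Set (WithLp 2 (H × U))) :=
  IsClosed.preimage (ContinuousLinearMap.continuous _) hA

/-- The block-diagonal operator `C ⊕ K` between the `ℓ²`-sums `H ⊕ U` and `Y ⊕ Z`, through
which the stage cost `ell` becomes a `quadraticCost`. -/
noncomputable def costOperator (C : H →L[𝕜] Y) (K : U →L[𝕜] Z) :
    WithLp 2 (H × U) →L[𝕜] WithLp 2 (Y × Z) :=
  (WithLp.prodContinuousLinearEquiv 2 𝕜 Y Z).symm.toContinuousLinearMap ∘L
    C.prodMap K ∘L (WithLp.prodContinuousLinearEquiv 2 𝕜 H U).toContinuousLinearMap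

theorem costOperator_apply (C : H →L[𝕜] Y) (K : U →L[𝕜] Z) (s : WithLp 2 (H × U)) :
    costOperator C K s = WithLp.toLp 2 (C s.fst, K s.snd) :=
  rfl

theorem exists_pos_mul_norm_le_norm_costOperator (A : H →ₗ.[𝕜] X) (B : U →L[𝕜] X)
    (C : H →L[𝕜] Y) (K : U →L[𝕜] Z) {c κ : ℝ} (hc : 0 < c) (hK : ∀ u : U, c * ‖u‖ ≤ ‖K u‖)
    (hκ : 0 < κ) (hAC : ∀ x : A.domain, κ * ‖(x : H)‖ ≤ ‖C (x : H)‖ + ‖A x‖) :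
    ∃ δ > 0, ∀ s ∈ steadyStates A B, δ * ‖s‖ ≤ ‖costOperator C K s‖ := by
  refine ⟨((1 + ‖B‖ / c) / κ + 1 / c)⁻¹, by positivity, fun s hs ↦ ?_⟩
  obtain ⟨hx, hAB⟩ := mem_steadyStates.mp hs
  set τ := ‖costOperator C K s‖
  have norm_C_le : ‖C s.fst‖ ≤ τ := WithLp.norm_fst_le _ (costOperator C K s)
  have norm_K_le : ‖K s.snd‖ ≤ τ := WithLp.norm_snd_le _ (costOperator C K s)
  have norm_snd_le : ‖s.snd‖ ≤ 1 / c * τ := by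
    rw [one_div_mul_eq_div, le_div_iff₀' hc]
    exact (hK _).trans norm_K_le
  have norm_A_le : ‖A ⟨s.fst, hx⟩‖ ≤ ‖B‖ * ‖s.snd‖ := by
    rw [eq_neg_of_add_eq_zero_left hAB, norm_neg]
    exact B.le_opNorm _
  have norm_fst_le : ‖s.fst‖ ≤ (1 + ‖B‖ / c) / κ * τ := by
    rw [div_mul_eq_mul_div, le_div_iff₀' hκ]
    calc κ * ‖s.fst‖ ≤ ‖C s.fst‖ + ‖A ⟨s.fst, hx⟩‖ := hAC ⟨s.fst, hx⟩
      _ ≤ τ + ‖B‖ * (1 / c * τ) := by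
          gcongr
          exact norm_A_le.trans (by gcongr)
      _ = (1 + ‖B‖ / c) * τ := by ring
  rw [inv_mul_le_iff₀ (by positivity), add_mul]
  exact (norm_withLp_prod_le_add 2 s).trans (add_le_add norm_fst_le norm_snd_le)

end SteadyStates

section OptimalSteadyState

variable {𝕜 H U X Y Z : Type*} [RCLike 𝕜]
  [NormedAddCommGroup H] [InnerProductSpace 𝕜 H]
  [NormedAddCommGroup U] [InnerProductSpace 𝕜 U]
  [NormedAddCommGroup X] [NormedSpace 𝕜 X]
  [NormedAddCommGroup Y] [InnerProductSpace 𝕜 Y]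
  [NormedAddCommGroup Z] [InnerProductSpace 𝕜 Z]

theorem quadraticCost_costOperator (C : H →L[𝕜] Y) (K : U →L[𝕜] Z) (z : H) (v : U)
    (s : WithLp 2 (H × U)) :
    quadraticCost (costOperator C K) (WithLp.toLp 2 (z, v)) s = ell C K z v s.fst s.snd := by
  simp only [quadraticCost, ell, costOperator_apply, WithLp.prod_norm_sq_eq_of_L2,
    WithLp.prod_inner_apply, WithLp.toLp_fst, WithLp.toLp_snd, WithLp.ofLp_fst, WithLp.ofLp_snd,
    map_add]
  ring

theorem optimal_steady_state_exists_unique_general [CompleteSpace H] [CompleteSpace U]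
    (A : H →ₗ.[𝕜] X) (hA : A.IsClosed) (B : U →L[𝕜] X) (C : H →L[𝕜] Y) (K : U →L[𝕜] Z)
    (z : H) (v : U) {c κ : ℝ} (hc : 0 < c) (hK : ∀ u : U, c * ‖u‖ ≤ ‖K u‖)
    (hκ : 0 < κ) (hAC : ∀ x : A.domain, κ * ‖(x : H)‖ ≤ ‖C (x : H)‖ + ‖A x‖) :
    ∃ (xe : H) (ue : U) (hxe : xe ∈ A.domain),
      A ⟨xe, hxe⟩ + B ue = 0 ∧
      (∀ (x : A.domain) (u : U), A x + B u = 0 →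
        ell C K z v xe ue ≤ ell C K z v (x : H) u) ∧
      (∀ (x : A.domain) (u : U), A x + B u = 0 →
        (∀ (x' : A.domain) (u' : U), A x' + B u' = 0 →
          ell C K z v (x : H) u ≤ ell C K z v (x' : H) u') →
        (x : H) = xe ∧ u = ue) ∧
      (∀ (x : A.domain) (u : U), A x + B u = 0 →
        ⟪(x : H), z⟫_𝕜 + ⟪C (x : H), C xe⟫_𝕜 + (⟪u, v⟫_𝕜 + ⟪K u, K ue⟫_𝕜) = 0) := by
  obtain ⟨δ, hδ, hT⟩ := exists_pos_mul_norm_le_norm_costOperator A B C K hc hK hκ hAC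
  have : CompleteSpace (steadyStates A B) := (isClosed_steadyStates hA B).completeSpace_coe
  obtain ⟨s, hs, hmin, huniq, hstat⟩ := exists_unique_isMinOn_quadraticCost (steadyStates A B)
    (costOperator C K) (WithLp.toLp 2 (z, v)) hδ hT
  have mem (x : A.domain) (u : U) (h : A x + B u = 0) :
      WithLp.toLp 2 ((x : H), u) ∈ steadyStates A B := mem_steadyStates.mpr ⟨x.2, h⟩
  simp only [isMinOn_iff, SetLike.mem_coe, quadraticCost_costOperator] at hmin huniq
  obtain ⟨hxe, hAB⟩ := mem_steadyStates.mp hs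
  refine ⟨s.fst, s.snd, hxe, hAB, fun x u h ↦ hmin _ (mem x u h), fun x u h hopt ↦ ?_,
    fun x u h ↦ ?_⟩
  · have heq := huniq _ (mem x u h) fun t ht ↦
      let ⟨hx, hAB⟩ := mem_steadyStates.mp ht
      hopt ⟨t.fst, hx⟩ t.snd hAB
    exact ⟨congrArg WithLp.fst heq, congrArg WithLp.snd heq⟩
  · have hconj := congrArg (starRingEnd 𝕜) (hstat _ (mem x u h))
    simp only [WithLp.prod_inner_apply, costOperator_apply, map_add, inner_conj_symm,
      map_zero] at hconj
    exact (add_add_add_comm _ _ _ _).trans hconj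

end OptimalSteadyState

/-- **Lemma 4.6**: under closedness of `A`, coercivity of `K` and the Lyapunov-like
form inequality, the optimal steady-state problem `min ℓ(x,u)` over
`𝒳 = {(x,u) ∈ dom A × U : Ax + Bu = 0}` has a unique solution `(x_e,u_e)`, and this
solution satisfies `⟨x, z + C*Cx_e⟩ + ⟨u, v + K*Ku_e⟩ = 0` for all `(x,u) ∈ 𝒳`. -/
theorem optimal_steady_state_exists_unique
    {𝕜 H U Y Z : Type*} [RCLike 𝕜]
    [NormedAddCommGroup H] [InnerProductSpace 𝕜 H] [CompleteSpace H]
    [NormedAddCommGroup U] [InnerProductSpace 𝕜 U] [CompleteSpace U]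
    [NormedAddCommGroup Y] [InnerProductSpace 𝕜 Y] [CompleteSpace Y]
    [NormedAddCommGroup Z] [InnerProductSpace 𝕜 Z] [CompleteSpace Z]
    (A : H →ₗ.[𝕜] H) (hA : Dense (A.domain : Set H)) (hAclosed : A.IsClosed)
    (B : U →L[𝕜] H) (C : H →L[𝕜] Y) (K : U →L[𝕜] Z) (z : H) (v : U)
    (c : ℝ) (hc : 0 < c) (hK : ∀ u : U, c * ‖u‖ ≤ ‖K u‖)
    (P : H →L[𝕜] H) (hP : IsSelfAdjoint P)
    (η m : ℝ) (hη : 0 < η) (hm : 0 < m)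
    (hLyap : ∀ x : A.domain,
      m * ‖(x : H)‖ ^ 2 ≤ ‖C (x : H)‖ ^ 2 - 2 * η * re ⟪A x, P (x : H)⟫_𝕜) :
    ∃ (xe : H) (ue : U) (hxe : xe ∈ A.domain),
      A ⟨xe, hxe⟩ + B ue = 0 ∧
      -- (xe, ue) minimizes ℓ over 𝒳
      (∀ (x : A.domain) (u : U), A x + B u = 0 →
        ell C K z v xe ue ≤ ell C K z v (x : H) u) ∧
      -- the minimizer is unique
      (∀ (x : A.domain) (u : U), A x + B u = 0 →
        (∀ (x' : A.domain) (u' : U), A x' + B u' = 0 →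
          ell C K z v (x : H) u ≤ ell C K z v (x' : H) u') →
        (x : H) = xe ∧ u = ue) ∧
      -- the optimality (orthogonality) condition
      (∀ (x : A.domain) (u : U), A x + B u = 0 →
        ⟪(x : H), z + adjoint C (C xe)⟫_𝕜 + ⟪u, v + adjoint K (K ue)⟫_𝕜 = 0) := by
  obtain ⟨κ, hκ, hAC⟩ := exists_pos_mul_norm_le_of_lyapunov A C P (2 * η) hm hLyap
  simpa only [inner_add_right, adjoint_inner_right] using
    optimal_steady_state_exists_unique_general A hAclosed B C K z v hc hK hκ hAC
end
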